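/- For every finite digraph D and every integer k ≥ 1, at least one of the following holds: (a) D admits an arboreal decomposition of width at most 3k−2; (b) D admits a haven of order k. -/

import Mathlib

/-- A digraph on vertex type `V`, given by its adjacency relation
(loops are allowed; parallel edges are irrelevant here). -/
structure Dgraph (V : Type) where
  Adj : V → V → Prop

namespace Dgraph

variable {V : Type}

/-- There is a directed walk from `u` to `v` in `D` using only vertices of `S`. -/
def ReachIn (D : Dgraph V) (S : Set V) (u v : V) : Prop :=
  u ∈ S ∧ v ∈ S ∧ Relation.ReflTransGen (fun a b => a ∈ S ∧ b ∈ S ∧ D.Adj a b) u v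

/-- The subdigraph of `D` induced on `S` is strongly connected. -/
def StronglyConnectedOn (D : Dgraph V) (S : Set V) : Prop :=
  ∀ u ∈ S, ∀ v ∈ S, D.ReachIn S u v

/-- `C` is the vertex set of a strong component of the subdigraph of `D` induced on `A`,
i.e. a maximal subset of `A` inducing a strongly connected subdigraph. -/
def IsStrongComponentOn (D : Dgraph V) (A C : Set V) : Prop :=
  C ⊆ A ∧ D.StronglyConnectedOn C ∧
    ∀ C' : Set V, C ⊆ C' → C' ⊆ A → D.StronglyConnectedOn C' → C' = C

/-- `Z` is a `(T, r)`-balanced separator of `D`: every strong component of `D \ Z`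
contains at most `r` vertices of `T`. -/
def IsBalancedSeparator (D : Dgraph V) (T : Set V) (r : ℕ) (Z : Set V) : Prop :=
  ∀ C : Set V, D.IsStrongComponentOn Zᶜ C → (C ∩ T).ncard ≤ r

/-- `T` is `(k, r)`-linked in `D`: every `(T, r)`-balanced separator has size at least `k + 1`. -/
def IsLinked (D : Dgraph V) (T : Set V) (k r : ℕ) : Prop :=
  ∀ Z : Set V, D.IsBalancedSeparator T r Z → k + 1 ≤ Z.ncard

/-- `β` is a haven of order `k` in `D`: it assigns to every `Z` with `|Z| ≤ k - 1`
the vertex set of a strong component of `D \ Z`, monotonically. -/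
def IsHaven (D : Dgraph V) (k : ℕ) (β : Set V → Set V) : Prop :=
  (∀ Z : Set V, Z.ncard < k → D.IsStrongComponentOn Zᶜ (β Z)) ∧
  (∀ Z Z' : Set V, Z.ncard < k → Z' ⊆ Z → β Z ⊆ β Z')

/-- A bramble in `D`: a family of (vertex sets of) strongly connected subdigraphs
any two of which touch. -/
def IsBramble (D : Dgraph V) (ℬ : Set (Set V)) : Prop :=
  (∀ B ∈ ℬ, D.StronglyConnectedOn B) ∧
  ∀ B ∈ ℬ, ∀ B' ∈ ℬ,
    (B ∩ B').Nonempty ∨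
      ((∃ u ∈ B, ∃ v ∈ B', D.Adj u v) ∧ (∃ u ∈ B', ∃ v ∈ B, D.Adj u v))

/-- `C` is a hitting set of the family `ℬ`. -/
def IsHittingSet (ℬ : Set (Set V)) (C : Set V) : Prop :=
  ∀ B ∈ ℬ, (C ∩ B).Nonempty

/-- The order of a bramble: the minimum size of a hitting set. -/
noncomputable def brambleOrder (ℬ : Set (Set V)) : ℕ :=
  sInf {n : ℕ | ∃ C : Set V, IsHittingSet ℬ C ∧ C.ncard = n}

/-- The `T`-bramble with threshold `g`: all induced strongly connected subdigraphs
containing at least `g` vertices of `T`. -/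
def TBramble (D : Dgraph V) (T : Set V) (g : ℕ) : Set (Set V) :=
  {B : Set V | D.StronglyConnectedOn B ∧ g ≤ (B ∩ T).ncard}

/-- The restricted bramble `ℬ(X)`: elements of `ℬ` intersecting `X`. -/
def restrictedBramble (ℬ : Set (Set V)) (X : Set V) : Set (Set V) :=
  {B ∈ ℬ | (B ∩ X).Nonempty}

/-- The complement bramble `ℬ̄(X)`: elements of `ℬ` disjoint from `X`. -/
def complementBramble (ℬ : Set (Set V)) (X : Set V) : Set (Set V) :=
  {B ∈ ℬ | B ∩ X = ∅}

/-- A directed path in `D`, as a duplicate-free list of consecutively adjacent vertices. -/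
def IsPath (D : Dgraph V) (P : List V) : Prop :=
  P.Nodup ∧ P.Chain' D.Adj

/-- A directed path in `D` starting in `A` and ending in `B`. -/
def IsPathFromTo (D : Dgraph V) (P : List V) (A B : Set V) : Prop :=
  D.IsPath P ∧ ∃ h : P ≠ [], P.head h ∈ A ∧ P.getLast h ∈ B

/-- There are `n` pairwise vertex-disjoint directed paths from `A` to `B` in `D`. -/
def HasDisjointPaths (D : Dgraph V) (A B : Set V) (n : ℕ) : Prop :=
  ∃ Ps : Fin n → List V, (∀ i, D.IsPathFromTo (Ps i) A B) ∧
    ∀ i j, i ≠ j → ∀ v, v ∈ Ps i → v ∉ Ps j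

/-- `A` is well-linked in `D`. -/
def WellLinked (D : Dgraph V) (A : Set V) : Prop :=
  ∀ X Y : Set V, X ⊆ A → Y ⊆ A → Disjoint X Y → X.ncard = Y.ncard →
    D.HasDisjointPaths X Y X.ncard

end Dgraph
namespace Dgraph

variable {V : Type}

/-- `S` is `Z`-guarded in `D`: `S` is disjoint from `Z` and no directed walk in `D \ Z`
with first and last vertices in `S` uses a vertex outside `Z ∪ S`. -/
def Guarded (D : Dgraph V) (Z S : Set V) : Prop :=
  Disjoint S Z ∧
    ∀ u ∈ S, ∀ v ∈ S, ∀ w, w ∉ Z → w ∉ S →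
      ¬(D.ReachIn Zᶜ u w ∧ D.ReachIn Zᶜ w v)

end Dgraph

/-- An arboreal decomposition of a digraph `D`: an arborescence (a finite rooted tree,
encoded by a parent function, with every vertex reaching the root by iterating `par`;
its edges go from `par v` to `v` for `v ≠ root`), bags `W` partitioning `V(D)` into
nonempty sets, guards `X` on the edges (indexed by their heads), such that for every
edge `e` (into `v ≠ root`) the union of bags `W r` over `r > e` is `X_e`-guarded. -/
structure ArborealDecomp (V : Type) (D : Dgraph V) where
  ι : Type
  finite : Finite ι
  root : ι
  par : ι → ι
  par_root : par root = root
  reaches_root : ∀ r : ι, ∃ n : ℕ, par^[n] r = root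
  W : ι → Set V
  X : ι → Set V
  W_nonempty : ∀ r, (W r).Nonempty
  W_cover : ∀ x : V, ∃ r, x ∈ W r
  W_disjoint : ∀ r r', r ≠ r' → Disjoint (W r) (W r')
  guarded : ∀ v, v ≠ root →
    D.Guarded (X v) (⋃ r ∈ {r : ι | ∃ n, par^[n] r = v}, W r)

namespace ArborealDecomp

variable {V : Type} {D : Dgraph V}

/-- The (heads of) edges incident to `r`: `e ∼ r`. -/
def edgesAt (d : ArborealDecomp V D) (r : d.ι) : Set d.ι :=
  {v | v ≠ d.root ∧ (v = r ∨ d.par v = r)}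

/-- `width(r) = |W_r ∪ ⋃_{e ∼ r} X_e|`. -/
noncomputable def widthAt (d : ArborealDecomp V D) (r : d.ι) : ℕ :=
  (d.W r ∪ ⋃ v ∈ d.edgesAt r, d.X v).ncard

/-- The decomposition has width at most `w`. -/
def HasWidthAtMost (d : ArborealDecomp V D) (w : ℕ) : Prop :=
  ∀ r, d.widthAt r ≤ w + 1

/-- The decomposition is nice. -/
def Nice (d : ArborealDecomp V D) : Prop :=
  (∀ v, v ≠ d.root →
    D.IsStrongComponentOn (d.X v)ᶜ (⋃ r ∈ {r : d.ι | ∃ n, d.par^[n] r = v}, d.W r)) ∧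
  (∀ r : d.ι,
    (⋃ v ∈ {v : d.ι | v ≠ d.root ∧ d.par v = r}, d.W v) ∩ (⋃ v ∈ d.edgesAt r, d.X v) = ∅)

end ArborealDecomp

/-!
If some set `T` is `(k, r)`-linked and `|T| ≤ 2r + 1`, then every `Z` with `|Z| ≤ k` leaves a strong
component containing more than half of `T`; two such components meet, so they form a haven.

Otherwise every small set has a small balanced separator, and we decompose the vertex set from the
root down. Given a nonempty set `S` guarded by a small `X`, separate `X` by `Z`, put a vertex of `S`
into `Z` to get a cut `Y`, and recurse into the strong components `C` of `S \ Y`. Let `K` be the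
strong component of `D \ Z` containing `C`. A walk in `D \ Y` from `C` to `C` stays in `K`; if it
avoids `X ∩ K`, then it avoids `X`, so it stays in `S \ Y` and hence in `C`. Thus `Y ∪ (X ∩ K)`
guards `C`, and it is small because `Z` balances `X`.
-/

open Relation

namespace Dgraph

variable {V : Type} {D : Dgraph V} {A B C S T X Y Z : Set V} {u v w x y : V} {k r : ℕ}

section StrongComponent

lemma reachIn_refl (h : u ∈ A) : D.ReachIn A u u :=
  ⟨h, h, .refl⟩

lemma ReachIn.trans (huv : D.ReachIn A u v) (hvw : D.ReachIn A v w) : D.ReachIn A u w :=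
  ⟨huv.1, hvw.2.1, huv.2.2.trans hvw.2.2⟩

lemma ReachIn.mono (hAB : A ⊆ B) (h : D.ReachIn A u v) : D.ReachIn B u v :=
  ⟨hAB h.1, hAB h.2.1,
    ReflTransGen.mono (fun _ _ hab ↦ ⟨hAB hab.1, hAB hab.2.1, hab.2.2⟩) _ _ h.2.2⟩

/-- The vertices lying on directed walks from `u` to `v` in the subdigraph induced on `A`. Strong
components are the case `u = v`, and guarding says that such sets stay inside the guarded set. -/
def between (D : Dgraph V) (A : Set V) (u v : V) : Set V :=
  {w | D.ReachIn A u w ∧ D.ReachIn A w v}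

lemma between_subset : D.between A u v ⊆ A := fun _ hw ↦ hw.1.2.1

lemma between_mono (hAB : A ⊆ B) : D.between A u v ⊆ D.between B u v :=
  fun _ hw ↦ ⟨hw.1.mono hAB, hw.2.mono hAB⟩

lemma between_subset_between (hu : D.ReachIn A x u) (hv : D.ReachIn A v y) :
    D.between A u v ⊆ D.between A x y :=
  fun _ hw ↦ ⟨hu.trans hw.1, hw.2.trans hv⟩

lemma ReachIn.of_between_subset (h : D.ReachIn A u v) (hB : D.between A u v ⊆ B) :
    D.ReachIn B u v := by
  obtain ⟨hu, hv, hwalk⟩ := h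
  induction hwalk using ReflTransGen.head_induction_on with
  | refl => exact reachIn_refl (hB ⟨reachIn_refl hv, reachIn_refl hv⟩)
  | @head a b hab hbv ih =>
    have hab' : D.ReachIn A a b := ⟨hab.1, hab.2.1, .single hab⟩
    have hbv' : D.ReachIn A b v := ⟨hab.2.1, hv, hbv⟩
    have hbvB := ih ((between_subset_between hab' (reachIn_refl hv)).trans hB) hab.2.1
    have haB : a ∈ B := hB ⟨reachIn_refl hu, hab'.trans hbv'⟩
    exact .trans ⟨haB, hbvB.1, .single ⟨haB, hbvB.1, hab.2.2⟩⟩ hbvB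

lemma between_subset_between_of_subset (hB : D.between A u v ⊆ B) :
    D.between A u v ⊆ D.between B u v := fun _ hw ↦
  ⟨hw.1.of_between_subset ((between_subset_between (reachIn_refl hw.1.1) hw.2).trans hB),
    hw.2.of_between_subset ((between_subset_between hw.1 (reachIn_refl hw.2.2.1)).trans hB)⟩

/-- The vertex set of the strong component containing `x` of the subdigraph induced on `A`; it is
empty if `x ∉ A`. -/
def strongComponent (D : Dgraph V) (A : Set V) (x : V) : Set V :=
  D.between A x x

lemma strongComponent_subset : D.strongComponent A x ⊆ A := between_subset

lemma strongComponent_mono (hAB : A ⊆ B) : D.strongComponent A x ⊆ D.strongComponent B x :=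
  between_mono hAB

lemma mem_strongComponent_self (hx : x ∈ A) : x ∈ D.strongComponent A x :=
  ⟨reachIn_refl hx, reachIn_refl hx⟩

lemma between_subset_strongComponent (hu : u ∈ D.strongComponent A x)
    (hv : v ∈ D.strongComponent A x) : D.between A u v ⊆ D.strongComponent A x :=
  between_subset_between hu.1 hv.2

lemma strongComponent_eq_of_mem (h : y ∈ D.strongComponent A x) :
    D.strongComponent A y = D.strongComponent A x :=
  (between_subset_strongComponent h h).antisymm (between_subset_between h.2 h.1)

lemma stronglyConnectedOn_strongComponent : D.StronglyConnectedOn (D.strongComponent A x) :=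
  fun _ hu _ hv ↦ (hu.2.trans hv.1).of_between_subset (between_subset_strongComponent hu hv)

lemma StronglyConnectedOn.subset_strongComponent (hC : D.StronglyConnectedOn C) (hCA : C ⊆ A)
    (hx : x ∈ C) : C ⊆ D.strongComponent A x :=
  fun y hy ↦ ⟨(hC x hx y hy).mono hCA, (hC y hy x hx).mono hCA⟩

lemma isStrongComponentOn_strongComponent (hx : x ∈ A) :
    D.IsStrongComponentOn A (D.strongComponent A x) :=
  ⟨strongComponent_subset, stronglyConnectedOn_strongComponent, fun _ hle hA hC ↦
    (hC.subset_strongComponent hA (hle (mem_strongComponent_self hx))).antisymm hle⟩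

lemma IsStrongComponentOn.strongComponent_eq (hC : D.IsStrongComponentOn A C) (hx : x ∈ C) :
    D.strongComponent A x = C :=
  hC.2.2 _ (hC.2.1.subset_strongComponent hC.1 hx) strongComponent_subset
    stronglyConnectedOn_strongComponent

lemma IsStrongComponentOn.subset_of_subset (hB : D.IsStrongComponentOn B S)
    (hA : D.IsStrongComponentOn A C) (hBA : B ⊆ A) (hSC : (S ∩ C).Nonempty) : S ⊆ C := by
  obtain ⟨x, hxS, hxC⟩ := hSC
  rw [← hA.strongComponent_eq hxC]
  exact hB.2.1.subset_strongComponent (hB.1.trans hBA) hxS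

end StrongComponent

section Guarded

lemma guarded_iff_between_subset :
    D.Guarded Z S ↔ Disjoint S Z ∧ ∀ u ∈ S, ∀ v ∈ S, D.between Zᶜ u v ⊆ S := by
  refine and_congr_right fun _ ↦ forall₄_congr fun u _ v _ ↦ forall_congr' fun w ↦ ?_
  exact ⟨fun h hw ↦ by_contra fun hwS ↦ h (between_subset hw) hwS hw, fun h _ hwS hw ↦ hwS (h hw)⟩

lemma guarded_empty_univ : D.Guarded ∅ Set.univ :=
  guarded_iff_between_subset.2 ⟨Set.disjoint_empty _, fun _ _ _ _ ↦ Set.subset_univ _⟩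

lemma Guarded.strongComponent (hS : D.Guarded X S) (hZY : Z ⊆ Y) (x : V) :
    D.Guarded (Y ∪ X ∩ D.strongComponent Zᶜ x) (D.strongComponent (S \ Y) x) := by
  rw [guarded_iff_between_subset] at hS ⊢
  obtain ⟨hdisj, hS⟩ := hS
  set K := D.strongComponent Zᶜ x
  have hCK : D.strongComponent (S \ Y) x ⊆ K :=
    strongComponent_mono fun y hy hyZ ↦ hy.2 (hZY hyZ)
  refine ⟨?_, fun u hu v hv ↦ ?_⟩
  · rw [Set.disjoint_union_right]
    exact ⟨Set.disjoint_sdiff_left.mono_left strongComponent_subset,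
      hdisj.mono (strongComponent_subset.trans Set.sdiff_subset) Set.inter_subset_left⟩
  set P := D.between (Y ∪ X ∩ K)ᶜ u v
  have hPY : P ⊆ Yᶜ :=
    between_subset.trans (Set.compl_subset_compl.2 Set.subset_union_left)
  have hPK : P ⊆ K := calc
    P ⊆ D.between Zᶜ u v := between_mono <|
      Set.compl_subset_compl.2 (hZY.trans Set.subset_union_left)
    _ ⊆ K := between_subset_strongComponent (hCK hu) (hCK hv)
  have hPX : P ⊆ Xᶜ := fun y hy hyX ↦ between_subset hy (.inr ⟨hyX, hPK hy⟩)
  have hPS : P ⊆ S := (between_subset_between_of_subset hPX).trans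
    (hS u (strongComponent_subset hu).1 v (strongComponent_subset hv).1)
  have hPSY : P ⊆ S \ Y := Set.subset_sdiff.2 ⟨hPS, Set.subset_compl_iff_disjoint_right.1 hPY⟩
  exact (between_subset_between_of_subset hPSY).trans (between_subset_strongComponent hu hv)

end Guarded

section Haven

lemma isHaven_empty [IsEmpty V] : D.IsHaven k fun _ ↦ ∅ :=
  ⟨fun _ _ ↦ ⟨Set.empty_subset _, fun _ hu ↦ hu.elim, fun C _ _ _ ↦ Set.eq_empty_of_isEmpty C⟩,
    fun _ _ _ _ ↦ subset_rfl⟩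

lemma inter_nonempty_of_ncard_lt_ncard_add_ncard [Finite V]
    (h : T.ncard < (A ∩ T).ncard + (B ∩ T).ncard) : (A ∩ B).Nonempty := by
  contrapose! h
  have hdisj : Disjoint (A ∩ T) (B ∩ T) :=
    (Set.disjoint_iff_inter_eq_empty.2 h).mono Set.inter_subset_left Set.inter_subset_left
  rw [← Set.ncard_union_eq hdisj]
  exact Set.ncard_le_ncard (Set.union_subset Set.inter_subset_right Set.inter_subset_right)

theorem IsLinked.exists_isHaven [Finite V] (hT : D.IsLinked T k r) (hcard : T.ncard ≤ 2 * r + 1) :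
    ∃ β, D.IsHaven (k + 1) β := by
  have hbig (Z : Set V) :
      ∃ C, Z.ncard < k + 1 → D.IsStrongComponentOn Zᶜ C ∧ r < (C ∩ T).ncard := by
    by_cases hZ : Z.ncard < k + 1
    · simpa [IsBalancedSeparator, hZ] using mt (hT Z) hZ.not_ge
    · exact ⟨∅, fun h ↦ absurd h hZ⟩
  choose β hβ using hbig
  refine ⟨β, fun Z hZ ↦ (hβ Z hZ).1, fun Z Z' hZ hsub ↦ ?_⟩
  obtain ⟨hcomp, hlt⟩ := hβ Z hZ
  obtain ⟨hcomp', hlt'⟩ := hβ Z' ((Set.ncard_le_ncard hsub).trans_lt hZ)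
  exact hcomp.subset_of_subset hcomp' (Set.compl_subset_compl.2 hsub)
    (inter_nonempty_of_ncard_lt_ncard_add_ncard (T := T) (by omega))

end Haven

end Dgraph

/-- A rooted tree with nodes `N`, each carrying a part of `V`, such that the parts of the children
of a node are disjoint subsets of its part which do not cover it. `Child p q` means that `q` is a
child of `p`. The parts are the unions of bags in an arboreal decomposition, whose tree is
presented here by its edge relation rather than by a parent function. -/
structure LaminarTree (V N : Type*) where
  root : N
  Child : N → N → Prop
  part : N → Set V
  reachable : ∀ p, ReflTransGen Child root p
  part_subset : ∀ {p q}, Child p q → part q ⊆ part p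
  eq_of_mem : ∀ {p q q' x}, Child p q → Child p q' → x ∈ part q → x ∈ part q' → q = q'
  exists_mem_forall_child_notMem : ∀ p, ∃ x ∈ part p, ∀ q, Child p q → x ∉ part q

namespace LaminarTree

section Bag

variable {V N : Type*} (t : LaminarTree V N) {p q : N} {x : V}

/-- The bag of a node: the vertices of its part which belong to no child. -/
def bag (p : N) : Set V :=
  {x | x ∈ t.part p ∧ ∀ q, t.Child p q → x ∉ t.part q}

lemma part_subset_of_reflTransGen (h : ReflTransGen t.Child p q) : t.part q ⊆ t.part p := by
  induction h with
  | refl => rfl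
  | tail _ hchild ih => exact (t.part_subset hchild).trans ih

lemma not_child_of_reflTransGen (h : ReflTransGen t.Child p q) : ¬ t.Child q p := fun hchild ↦ by
  obtain ⟨x, hxq, hx⟩ := t.exists_mem_forall_child_notMem q
  exact hx p hchild (t.part_subset_of_reflTransGen h hxq)

/-- The edges of the tree that descend to a part containing `x`. They form a single path from the
root, as disjointness of sibling parts makes the relation right unique. -/
def ChildAt (x : V) (p q : N) : Prop :=
  t.Child p q ∧ x ∈ t.part q

lemma rightUnique_childAt : Relator.RightUnique (t.ChildAt x) :=
  fun _ _ _ hq hq' ↦ t.eq_of_mem hq.1 hq'.1 hq.2 hq'.2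

lemma reflTransGen_childAt (h : ReflTransGen t.Child p q) (hx : x ∈ t.part q) :
    ReflTransGen (t.ChildAt x) p q := by
  induction h with
  | refl => exact .refl
  | tail _ hchild ih => exact (ih (t.part_subset hchild hx)).tail ⟨hchild, hx⟩

lemma reflTransGen_childAt_total (hp : x ∈ t.part p) (hq : x ∈ t.part q) :
    ReflTransGen (t.ChildAt x) p q ∨ ReflTransGen (t.ChildAt x) q p :=
  ReflTransGen.total_of_right_unique t.rightUnique_childAt
    (t.reflTransGen_childAt (t.reachable p) hp) (t.reflTransGen_childAt (t.reachable q) hq)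

lemma eq_of_reflTransGen_childAt_of_mem_bag (h : ReflTransGen (t.ChildAt x) p q)
    (hx : x ∈ t.bag p) : p = q := by
  rcases h.cases_head with rfl | ⟨q', hq', _⟩
  · rfl
  · exact absurd hq'.2 (hx.2 q' hq'.1)

lemma disjoint_bag (hpq : p ≠ q) : Disjoint (t.bag p) (t.bag q) := by
  rw [Set.disjoint_left]
  intro x hp hq
  rcases t.reflTransGen_childAt_total hp.1 hq.1 with h | h
  · exact hpq (t.eq_of_reflTransGen_childAt_of_mem_bag h hp)
  · exact hpq (t.eq_of_reflTransGen_childAt_of_mem_bag h hq).symm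

lemma exists_reflTransGen_mem_bag [Finite V] (hx : x ∈ t.part p) :
    ∃ q, ReflTransGen t.Child p q ∧ x ∈ t.bag q := by
  induction p using (InvImage.wf t.part wellFounded_lt).induction with
  | _ p ih =>
    by_cases hbag : x ∈ t.bag p
    · exact ⟨p, .refl, hbag⟩
    obtain ⟨q, hpq, hxq⟩ : ∃ q, t.Child p q ∧ x ∈ t.part q := by
      simpa [bag, hx] using hbag
    have hlt : t.part q < t.part p := (t.part_subset hpq).lt_of_not_ge fun hle ↦ by
      obtain ⟨y, hyp, hy⟩ := t.exists_mem_forall_child_notMem p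
      exact hy q hpq (hle hyp)
    obtain ⟨q', hqq', hbag'⟩ := ih q hlt hxq
    exact ⟨q', hqq'.head hpq, hbag'⟩

lemma iUnion_bag [Finite V] (p : N) : ⋃ q ∈ {q | ReflTransGen t.Child p q}, t.bag q = t.part p := by
  ext x
  simp only [Set.mem_iUnion₂, Set.mem_ofPred_eq, exists_prop]
  exact ⟨fun ⟨_, hpq, hxq⟩ ↦ t.part_subset_of_reflTransGen hpq hxq.1,
    t.exists_reflTransGen_mem_bag⟩

end Bag

section Parent

variable {V N : Type*} (t : LaminarTree V N) {p p' q : N}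

lemma eq_of_reflTransGen_childAt_of_child {x : V} (h : ReflTransGen (t.ChildAt x) p p')
    (hp : t.Child p q) (hp' : t.Child p' q) (hx : x ∈ t.part q) : p = p' := by
  rcases h.cases_head with rfl | ⟨q', hq', hq'p'⟩
  · rfl
  · obtain rfl : q' = q := t.eq_of_mem hq'.1 hp hq'.2 hx
    exact absurd hp' (t.not_child_of_reflTransGen (ReflTransGen.mono (fun _ _ h ↦ h.1) _ _ hq'p'))

lemma leftUnique_child : Relator.LeftUnique t.Child := by
  intro p p' q hp hp'
  obtain ⟨x, hx, -⟩ := t.exists_mem_forall_child_notMem q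
  rcases t.reflTransGen_childAt_total (t.part_subset hp hx) (t.part_subset hp' hx) with h | h
  · exact t.eq_of_reflTransGen_childAt_of_child h hp hp' hx
  · exact (t.eq_of_reflTransGen_childAt_of_child h hp' hp hx).symm

open Classical in
/-- The parent of a node. The root is its own parent, as `ArborealDecomp` requires. -/
noncomputable def parent (q : N) : N :=
  if h : ∃ p, t.Child p q then h.choose else q

variable {t}

lemma parent_eq (h : t.Child p q) : t.parent q = p := by
  have hex : ∃ p, t.Child p q := ⟨p, h⟩
  rw [parent, dif_pos hex]
  exact t.leftUnique_child hex.choose_spec h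

variable (t) in
lemma parent_root : t.parent t.root = t.root :=
  dif_neg fun ⟨p, hp⟩ ↦ t.not_child_of_reflTransGen (t.reachable p) hp

lemma child_parent (hq : q ≠ t.root) : t.Child (t.parent q) q := by
  rcases (t.reachable q).cases_tail with h | ⟨p, -, hp⟩
  · exact absurd h hq
  · rwa [parent_eq hp]

lemma exists_iterate_parent_eq_iff : (∃ n, t.parent^[n] q = p) ↔ ReflTransGen t.Child p q := by
  constructor
  · rintro ⟨n, rfl⟩
    induction n with
    | zero => exact .refl
    | succ n ih =>
      rw [Function.iterate_succ_apply']
      by_cases hroot : t.parent^[n] q = t.root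
      · rwa [hroot, parent_root, ← hroot]
      · exact ih.head (child_parent hroot)
  · intro h
    induction h with
    | refl => exact ⟨0, rfl⟩
    | tail _ hchild ih =>
      obtain ⟨n, hn⟩ := ih
      exact ⟨n + 1, by rw [Function.iterate_succ_apply, parent_eq hchild, hn]⟩

end Parent

section ArborealDecomp

variable {V N : Type} [Finite V] [Finite N] {D : Dgraph V} (t : LaminarTree V N)
  (hroot : t.part t.root = Set.univ) (guard : N → Set V)
  (hguard : ∀ p, D.Guarded (guard p) (t.part p))

/-- The arboreal decomposition with the tree and the bags of `t`, and with the guard of the edge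
into `p` given by `guard p`. -/
noncomputable def toArborealDecomp : ArborealDecomp V D where
  ι := N
  finite := inferInstance
  root := t.root
  par := t.parent
  par_root := t.parent_root
  reaches_root p := exists_iterate_parent_eq_iff.2 (t.reachable p)
  W := t.bag
  X := guard
  W_nonempty := t.exists_mem_forall_child_notMem
  W_cover x := by
    obtain ⟨p, -, hp⟩ := t.exists_reflTransGen_mem_bag (hroot ▸ Set.mem_univ x)
    exact ⟨p, hp⟩
  W_disjoint _ _ := t.disjoint_bag
  guarded p _ := by
    simp only [exists_iterate_parent_eq_iff, iUnion_bag]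
    exact hguard p

lemma widthAt_toArborealDecomp_le {p : N} {Y : Set V} (hbag : t.bag p ⊆ Y) (hp : guard p ⊆ Y)
    (hchild : ∀ q, t.Child p q → guard q ⊆ Y) :
    (t.toArborealDecomp hroot guard hguard).widthAt p ≤ Y.ncard := by
  refine Set.ncard_le_ncard (Set.union_subset hbag (Set.iUnion₂_subset ?_))
  rintro q ⟨hq, rfl | rfl⟩
  · exact hp
  · exact hchild q (child_parent hq)

end ArborealDecomp

end LaminarTree

namespace Dgraph

/-- A node of the recursive decomposition: a nonempty vertex set `part`, guarded by a set `guard` of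
at most `n` vertices. -/
@[ext]
structure GuardedPart {V : Type} (D : Dgraph V) (n : ℕ) where
  part : Set V
  guard : Set V
  nonempty : part.Nonempty
  guarded : D.Guarded guard part
  ncard_guard_le : guard.ncard ≤ n

namespace GuardedPart

variable {V : Type} {D : Dgraph V} {n k r : ℕ} {sep : Set V → Set V}

instance [Finite V] : Finite (D.GuardedPart n) :=
  Finite.of_injective (fun p ↦ (p.part, p.guard)) fun _ _ h ↦
    GuardedPart.ext (Prod.ext_iff.1 h).1 (Prod.ext_iff.1 h).2

/-- The whole vertex set, which is guarded by the empty set. -/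
def univ [Nonempty V] : D.GuardedPart n where
  part := Set.univ
  guard := ∅
  nonempty := Set.univ_nonempty
  guarded := guarded_empty_univ
  ncard_guard_le := by simp

/-- The set removed from a part: the separator `sep p.guard` of its guard, together with a vertex
of the part, which ensures that the bag is nonempty. -/
noncomputable def cut (sep : Set V → Set V) (p : D.GuardedPart n) : Set V :=
  insert p.nonempty.some (sep p.guard)

/-- `q` is a child of `p`: its part is a strong component of `p.part` with the cut removed, and its
guard consists of the cut and the vertices of `p.guard` in the strong component of
`D \ sep p.guard` containing the part of `q`. As `q.part` is nonempty, `x` lies in it. -/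
def IsChild (sep : Set V → Set V) (p q : D.GuardedPart n) : Prop :=
  ∃ x, q.part = D.strongComponent (p.part \ p.cut sep) x ∧
    q.guard = p.cut sep ∪ p.guard ∩ D.strongComponent (sep p.guard)ᶜ x

lemma sdiff_cut_subset (p : D.GuardedPart n) : p.part \ p.cut sep ⊆ (sep p.guard)ᶜ :=
  fun _ hx hxsep ↦ hx.2 (Set.mem_insert_of_mem _ hxsep)

lemma ncard_cut_le (hsep : ∀ T : Set V, T.ncard ≤ n → (sep T).ncard ≤ k) (p : D.GuardedPart n) :
    (p.cut sep).ncard ≤ k + 1 :=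
  (Set.ncard_insert_le _ _).trans (Nat.succ_le_succ (hsep _ p.ncard_guard_le))

lemma IsChild.part_subset_sdiff {p q : D.GuardedPart n} (h : p.IsChild sep q) :
    q.part ⊆ p.part \ p.cut sep := by
  obtain ⟨x, hx, -⟩ := h
  exact hx ▸ strongComponent_subset

lemma IsChild.guard_subset {p q : D.GuardedPart n} (h : p.IsChild sep q) :
    q.guard ⊆ p.cut sep ∪ p.guard := by
  obtain ⟨x, -, hx⟩ := h
  exact hx ▸ Set.union_subset_union_right _ Set.inter_subset_left

lemma IsChild.eq_of_mem {p q q' : D.GuardedPart n} {y : V} (h : p.IsChild sep q)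
    (h' : p.IsChild sep q') (hy : y ∈ q.part) (hy' : y ∈ q'.part) : q = q' := by
  obtain ⟨x, hpart, hguard⟩ := h
  obtain ⟨x', hpart', hguard'⟩ := h'
  rw [hpart] at hy
  rw [hpart'] at hy'
  have hK := strongComponent_eq_of_mem (strongComponent_mono p.sdiff_cut_subset hy)
  have hK' := strongComponent_eq_of_mem (strongComponent_mono p.sdiff_cut_subset hy')
  ext1
  · rw [hpart, hpart', ← strongComponent_eq_of_mem hy, ← strongComponent_eq_of_mem hy']
  · rw [hguard, hguard', ← hK, ← hK']

lemma exists_mem_forall_isChild_notMem (p : D.GuardedPart n) :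
    ∃ x ∈ p.part, ∀ q, p.IsChild sep q → x ∉ q.part :=
  ⟨_, p.nonempty.some_mem, fun _ hq hx ↦ (hq.part_subset_sdiff hx).2 (Set.mem_insert _ _)⟩

lemma exists_isChild_mem
    (hsep : ∀ T : Set V, T.ncard ≤ k + r + 1 → (sep T).ncard ≤ k)
    (hbal : ∀ T : Set V, T.ncard ≤ k + r + 1 → D.IsBalancedSeparator T r (sep T))
    (p : D.GuardedPart (k + r + 1)) {x : V} (hx : x ∈ p.part \ p.cut sep) :
    ∃ q, p.IsChild sep q ∧ x ∈ q.part := by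
  have hcard : (p.cut sep ∪ p.guard ∩ D.strongComponent (sep p.guard)ᶜ x).ncard ≤ k + r + 1 := by
    have hunion := Set.ncard_union_le (p.cut sep) (p.guard ∩ D.strongComponent (sep p.guard)ᶜ x)
    have hcut := p.ncard_cut_le hsep
    have hinter := hbal _ p.ncard_guard_le _
      (isStrongComponentOn_strongComponent (p.sdiff_cut_subset hx))
    rw [Set.inter_comm] at hinter
    omega
  exact ⟨⟨_, _, ⟨x, mem_strongComponent_self hx⟩,
    p.guarded.strongComponent (Set.subset_insert _ _) x, hcard⟩,
    ⟨x, rfl, rfl⟩, mem_strongComponent_self hx⟩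

section Tree

variable [Nonempty V]

/-- The nodes that the recursive decomposition reaches from the whole vertex set. -/
abbrev Reachable (D : Dgraph V) (n : ℕ) (sep : Set V → Set V) : Type :=
  {p : D.GuardedPart n // ReflTransGen (IsChild sep) univ p}

lemma reflTransGen_reachable (p : Reachable D n sep) :
    ReflTransGen (fun p q : Reachable D n sep ↦ p.1.IsChild sep q.1) ⟨univ, .refl⟩ p := by
  obtain ⟨p, hp⟩ := p
  induction hp with
  | refl => exact .refl
  | tail hp hchild ih => exact ih.tail hchild

/-- The tree of the recursive decomposition. -/
def laminarTree (D : Dgraph V) (n : ℕ) (sep : Set V → Set V) :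
    LaminarTree V (Reachable D n sep) where
  root := ⟨univ, .refl⟩
  Child p q := p.1.IsChild sep q.1
  part p := p.1.part
  reachable := reflTransGen_reachable
  part_subset h := h.part_subset_sdiff.trans Set.sdiff_subset
  eq_of_mem h h' hx hx' := Subtype.ext (h.eq_of_mem h' hx hx')
  exists_mem_forall_child_notMem p := by
    obtain ⟨x, hx, hmem⟩ := p.1.exists_mem_forall_isChild_notMem (sep := sep)
    exact ⟨x, hx, fun q ↦ hmem q.1⟩

lemma bag_laminarTree_subset_cut
    (hsep : ∀ T : Set V, T.ncard ≤ k + r + 1 → (sep T).ncard ≤ k)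
    (hbal : ∀ T : Set V, T.ncard ≤ k + r + 1 → D.IsBalancedSeparator T r (sep T))
    (p : Reachable D (k + r + 1) sep) : (laminarTree D _ sep).bag p ⊆ p.1.cut sep := by
  rintro x ⟨hx, hbag⟩
  by_contra hcut
  obtain ⟨q, hpq, hxq⟩ := p.1.exists_isChild_mem hsep hbal ⟨hx, hcut⟩
  exact hbag ⟨q, p.2.tail hpq⟩ hpq hxq

end Tree

end GuardedPart

open GuardedPart in
theorem exists_hasWidthAtMost_of_forall_not_isLinked {V : Type} [Finite V] [Nonempty V]
    {D : Dgraph V} {k r : ℕ} (h : ∀ T : Set V, T.ncard ≤ k + r + 1 → ¬ D.IsLinked T k r) :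
    ∃ d : ArborealDecomp V D, d.HasWidthAtMost (2 * k + r + 1) := by
  have hex (T : Set V) :
      ∃ Z : Set V, T.ncard ≤ k + r + 1 → Z.ncard ≤ k ∧ D.IsBalancedSeparator T r Z := by
    by_cases hT : T.ncard ≤ k + r + 1
    · simpa [IsLinked, hT, and_comm, Nat.lt_succ_iff] using h T hT
    · exact ⟨∅, fun hle ↦ absurd hle hT⟩
  choose sep hsep using hex
  have hcard T hT := (hsep T hT).1
  have hbal T hT := (hsep T hT).2
  refine ⟨(laminarTree D (k + r + 1) sep).toArborealDecomp rfl (fun p ↦ p.1.guard)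
    fun p ↦ p.1.guarded, fun p ↦ ?_⟩
  calc
    _ ≤ (p.1.cut sep ∪ p.1.guard).ncard := LaminarTree.widthAt_toArborealDecomp_le _ _ _ _
      ((bag_laminarTree_subset_cut hcard hbal p).trans Set.subset_union_left)
      Set.subset_union_right fun _ hq ↦ hq.guard_subset
    _ ≤ (p.1.cut sep).ncard + p.1.guard.ncard := Set.ncard_union_le _ _
    _ ≤ (k + 1) + (k + r + 1) := add_le_add (p.1.ncard_cut_le hcard) p.1.ncard_guard_le
    _ = 2 * k + r + 1 + 1 := by ring

end Dgraph

open Dgraph in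
/-- every finite digraph `D` either admits an arboreal decomposition of
width at most `3k - 2`, or admits a haven of order `k`. -/
theorem stmt2 {V : Type} [Finite V] (D : Dgraph V) (k : ℕ) (hk : 1 ≤ k) :
    (∃ d : ArborealDecomp V D, d.HasWidthAtMost (3 * k - 2)) ∨
    (∃ β : Set V → Set V, D.IsHaven k β) := by
  rcases isEmpty_or_nonempty V with _ | _
  · exact .inr ⟨_, isHaven_empty⟩
  obtain ⟨m, rfl⟩ : ∃ m, k = m + 1 := Nat.exists_eq_add_of_le' hk
  by_cases hlinked : ∃ T : Set V, T.ncard ≤ m + m + 1 ∧ D.IsLinked T m m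
  · obtain ⟨T, hcard, hT⟩ := hlinked
    exact .inr (hT.exists_isHaven (by omega))
  · push Not at hlinked
    obtain ⟨d, hd⟩ := exists_hasWidthAtMost_of_forall_not_isLinked hlinked
    rw [show 2 * m + m + 1 = 3 * (m + 1) - 2 by omega] at hd
    exact .inl ⟨d, hd⟩
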